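/- arXiv:2104.10165 — 3 statements merged into one kernel-verified Lean document; each statement's English description precedes it below -/
import Mathlib

section
/- Every element of the group G is a unitary matrix (so G is contained in U(2)), but G contains an element of determinant -1 (namely d), so G is not contained in SU(2). -/
open Matrix Complex
open scoped MatrixGroups

noncomputable section

def iM : Matrix (Fin 2) (Fin 2) ℂ := !![0, 1; -1, 0]
def jM : Matrix (Fin 2) (Fin 2) ℂ := !![0, Complex.I; Complex.I, 0]
def kM : Matrix (Fin 2) (Fin 2) ℂ := !![Complex.I, 0; 0, -Complex.I]
def wM : Matrix (Fin 2) (Fin 2) ℂ :=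
  (1 / 2 : ℂ) • !![-1 + Complex.I, 1 + Complex.I; -1 + Complex.I, -1 - Complex.I]
def cM : Matrix (Fin 2) (Fin 2) ℂ :=
  ((Real.sqrt 2 : ℂ))⁻¹ • !![-Complex.I, Complex.I; Complex.I, Complex.I]
def dM : Matrix (Fin 2) (Fin 2) ℂ :=
  ((Real.sqrt 2 : ℂ))⁻¹ • !![-1, 1; 1, 1]

def G : Subgroup (GL (Fin 2) ℂ) :=
  Subgroup.closure {g : GL (Fin 2) ℂ |
    (g : Matrix (Fin 2) (Fin 2) ℂ) = iM ∨
    (g : Matrix (Fin 2) (Fin 2) ℂ) = wM ∨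
    (g : Matrix (Fin 2) (Fin 2) ℂ) = dM}

/-!
The units of a star monoid that are unitary form a subgroup, so a generated group consists of
unitaries as soon as its generators are unitary. The generators here have Cayley–Klein form: `i` and
`w` are unit quaternions, while `d` has the same shape with its second row negated, which keeps the
rows orthonormal but turns the determinant into `-1`.
-/

section StarMonoid

variable {R : Type*} [Monoid R] [StarMul R]

theorem mem_range_unitary_toUnits_iff {u : Rˣ} :
    u ∈ (Unitary.toUnits (R := R)).range ↔ (u : R) ∈ unitary R :=
  ⟨fun ⟨v, hv⟩ ↦ hv ▸ v.2, fun hu ↦ ⟨⟨u, hu⟩, Units.ext rfl⟩⟩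

end StarMonoid

section CayleyKlein

variable {R : Type*} [CommRing R] [StarRing R] {u a b : R}

/-- The `2 × 2` matrix with Cayley–Klein parameters `a`, `b` and determinant phase `u`. For
`a * star a + b * star b = 1` and `u` unitary it is unitary of determinant `u`; over `ℂ`, the case
`u = 1` is the standard parametrization of `SU(2)` by unit quaternions. -/
def cayleyKlein (u a b : R) : Matrix (Fin 2) (Fin 2) R :=
  !![a, b; -(u * star b), u * star a]

theorem det_cayleyKlein (hab : a * star a + b * star b = 1) : (cayleyKlein u a b).det = u := by
  rw [cayleyKlein, det_fin_two_of]
  linear_combination u * hab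

theorem cayleyKlein_mem_unitaryGroup (hu : u ∈ unitary R) (hab : a * star a + b * star b = 1) :
    cayleyKlein u a b ∈ unitaryGroup (Fin 2) R := by
  have star_cayleyKlein :
      star (cayleyKlein u a b) = !![star a, -(star u * b); star b, star u * a] := by
    ext r s
    fin_cases r <;> fin_cases s <;> simp [cayleyKlein, star_apply]
  have phase_mul_norm : u * star u * (a * star a + b * star b) = 1 := by
    rw [hab, mul_one, Unitary.mul_star_self_of_mem hu]
  rw [mem_unitaryGroup_iff, star_cayleyKlein, cayleyKlein, mul_fin_two, one_fin_two, hab]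
  congrm !![1, ?_; ?_, ?_]
  · ring
  · ring
  · linear_combination phase_mul_norm

end CayleyKlein

theorem iM_eq_cayleyKlein : iM = cayleyKlein 1 0 1 := by
  simp [iM, cayleyKlein]

theorem wM_eq_cayleyKlein : wM = cayleyKlein 1 ((-1 + I) / 2) ((1 + I) / 2) := by
  simp only [wM, cayleyKlein, star_div₀, star_add, star_neg, star_one, star_ofNat, star_def, conj_I,
    smul_of, smul_cons, smul_empty, smul_eq_mul]
  congrm !![?_, ?_; ?_, ?_] <;> ring

theorem dM_eq_cayleyKlein :
    dM = cayleyKlein (-1) (-(Real.sqrt 2 : ℂ)⁻¹) (Real.sqrt 2 : ℂ)⁻¹ := by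
  simp [dM, cayleyKlein]

theorem iM_mem_unitaryGroup : iM ∈ unitaryGroup (Fin 2) ℂ := by
  rw [iM_eq_cayleyKlein]
  exact cayleyKlein_mem_unitaryGroup (one_mem _) (by simp)

theorem wM_mem_unitaryGroup : wM ∈ unitaryGroup (Fin 2) ℂ := by
  rw [wM_eq_cayleyKlein]
  refine cayleyKlein_mem_unitaryGroup (one_mem _) ?_
  simp only [star_div₀, star_add, star_neg, star_one, star_ofNat, star_def, conj_I]
  linear_combination -(1 / 2 : ℂ) * I_sq

theorem neg_inv_sqrt_two_mul_star_add :
    -(Real.sqrt 2 : ℂ)⁻¹ * star (-(Real.sqrt 2 : ℂ)⁻¹) +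
      (Real.sqrt 2 : ℂ)⁻¹ * star (Real.sqrt 2 : ℂ)⁻¹ = 1 := by
  have sqrt_sq : (Real.sqrt 2 : ℂ) ^ 2 = 2 := mod_cast Real.sq_sqrt zero_le_two
  have star_inv_sqrt : star (Real.sqrt 2 : ℂ)⁻¹ = (Real.sqrt 2 : ℂ)⁻¹ := by simp
  calc
    _ = 2 * ((Real.sqrt 2 : ℂ) ^ 2)⁻¹ := by rw [star_neg, star_inv_sqrt]; ring
    _ = 1 := by rw [sqrt_sq]; norm_num

theorem dM_mem_unitaryGroup : dM ∈ unitaryGroup (Fin 2) ℂ := by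
  rw [dM_eq_cayleyKlein]
  exact cayleyKlein_mem_unitaryGroup (by simp [Unitary.mem_iff]) neg_inv_sqrt_two_mul_star_add

theorem det_dM : dM.det = -1 := by
  rw [dM_eq_cayleyKlein, det_cayleyKlein neg_inv_sqrt_two_mul_star_add]

theorem G_le_range_unitary_toUnits :
    G ≤ (Unitary.toUnits (R := Matrix (Fin 2) (Fin 2) ℂ)).range := by
  refine (Subgroup.closure_le _).2 fun g hg ↦ mem_range_unitary_toUnits_iff.2 ?_
  obtain hi | hw | hd := hg
  · exact hi ▸ iM_mem_unitaryGroup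
  · exact hw ▸ wM_mem_unitaryGroup
  · exact hd ▸ dM_mem_unitaryGroup

theorem G_in_U2_not_in_SU2 :
    (∀ g ∈ G, (g : Matrix (Fin 2) (Fin 2) ℂ) ∈ Matrix.unitaryGroup (Fin 2) ℂ) ∧
    (∃ g ∈ G, (g : Matrix (Fin 2) (Fin 2) ℂ) = dM) ∧
    dM.det = -1 := by
  refine ⟨fun g hg ↦ mem_range_unitary_toUnits_iff.1 (G_le_range_unitary_toUnits hg), ?_, det_dM⟩
  let d : GL (Fin 2) ℂ := Unitary.toUnits ⟨dM, dM_mem_unitaryGroup⟩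
  exact ⟨d, Subgroup.subset_closure (.inr (.inr rfl)), rfl⟩
end
end

section
/- The subgroup H of GL(2,ℂ) generated by {j, d} has order 16; moreover, setting a := j*d and b := d, the pair {a, b} also generates H and satisfies a^8 = 1, b^2 = 1, and a*b = b*a^3, so H is the semidihedral group of order 16. -/
open Matrix Complex
open scoped MatrixGroups

noncomputable section

def H : Subgroup (GL (Fin 2) ℂ) :=
  Subgroup.closure {g : GL (Fin 2) ℂ |
    (g : Matrix (Fin 2) (Fin 2) ℂ) = jM ∨
    (g : Matrix (Fin 2) (Fin 2) ℂ) = dM}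

/-!
Put `a = j * d`. Then `d ^ 2 = 1` and `a ^ 4 = j ^ 2 = -1`. The first equation and `a ^ 4 = j ^ 2`
alone give `a * d = j = d * a⁻¹ * j ^ 2 = d * a ^ 3`. Since `a ^ 4 = -1`, the order of `a` is `8`.
Thus `d` normalizes `⟨a⟩`, and lies outside it because it does not commute with `a`; so `⟨a⟩` has
index two in `⟨a, d⟩`, whose order is `2 * 8`.
-/

section IndexTwo

variable {G : Type*} [Group G]

theorem relIndex_sup_right_of_le_normalizer {K N : Subgroup G}
    (hK : K ≤ Subgroup.normalizer N) : N.relIndex (K ⊔ N) = N.relIndex K :=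
  letI := Subgroup.normal_subgroupOf_of_le_normalizer hK
  letI := Subgroup.normal_subgroupOf_sup_of_le_normalizer hK
  Nat.card_congr (QuotientGroup.quotientInfEquivProdNormalizerQuotient K N hK).toEquiv.symm

theorem relIndex_zpowers_eq_two {N : Subgroup G} {b : G} (hb : b ∉ N) (hb2 : b ^ 2 ∈ N) :
    N.relIndex (Subgroup.zpowers b) = 2 := by
  rw [Subgroup.relIndex_eq_two_iff_exists_notMem_and']
  refine ⟨b, Subgroup.mem_zpowers b, hb, ?_⟩
  have even_zpow_mem (m : ℤ) : b ^ (2 * m) ∈ N := by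
    rw [_root_.zpow_mul]
    exact N.zpow_mem (by exact_mod_cast hb2) m
  intro x hx
  obtain ⟨n, rfl⟩ := Subgroup.mem_zpowers_iff.1 hx
  obtain ⟨m, rfl | rfl⟩ := n.even_or_odd'
  · exact Or.inr (even_zpow_mem m)
  · refine Or.inl ?_
    rw [← _root_.zpow_one_add, show 1 + (2 * m + 1) = 2 * (m + 1) by ring]
    exact even_zpow_mem (m + 1)

theorem mem_normalizer_of_sq_mem {N : Subgroup G} {b : G} (hb2 : b ^ 2 ∈ N)
    (hconj : ∀ x ∈ N, b⁻¹ * x * b ∈ N) : b ∈ Subgroup.normalizer N := by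
  refine Subgroup.mem_normalizer_iff''.2 fun x ↦ ⟨hconj x, fun hx ↦ ?_⟩
  have hx' : x = b ^ 2 * (b⁻¹ * (b⁻¹ * x * b) * b) * (b ^ 2)⁻¹ := by group
  rw [hx']
  exact N.mul_mem (N.mul_mem hb2 (hconj _ hx)) (N.inv_mem hb2)

theorem inv_mul_mul_mem_zpowers {a b : G} (hab : b⁻¹ * a * b ∈ Subgroup.zpowers a) {x : G}
    (hx : x ∈ Subgroup.zpowers a) : b⁻¹ * x * b ∈ Subgroup.zpowers a := by
  obtain ⟨n, rfl⟩ := Subgroup.mem_zpowers_iff.1 hx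
  have hconj : b⁻¹ * a ^ n * b = (b⁻¹ * a * b) ^ n := by
    simpa only [inv_inv] using (conj_zpow (a := b⁻¹) (b := a) (i := n)).symm
  exact hconj ▸ Subgroup.zpow_mem _ hab n

theorem card_closure_pair_eq_two_mul_orderOf {a b : G} (hb : b ∉ Subgroup.zpowers a)
    (hb2 : b ^ 2 ∈ Subgroup.zpowers a) (hab : b⁻¹ * a * b ∈ Subgroup.zpowers a) :
    Nat.card (Subgroup.closure {a, b}) = 2 * orderOf a := by
  have hnorm : Subgroup.zpowers b ≤ Subgroup.normalizer (Subgroup.zpowers a) :=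
    Subgroup.zpowers_le.2 <|
      mem_normalizer_of_sq_mem hb2 fun _ hx ↦ inv_mul_mul_mem_zpowers hab hx
  have hsup : Subgroup.closure {a, b} = Subgroup.zpowers b ⊔ Subgroup.zpowers a := by
    rw [Set.pair_comm, Set.insert_eq, Subgroup.closure_union, ← Subgroup.zpowers_eq_closure,
      ← Subgroup.zpowers_eq_closure]
  have hindex : (Subgroup.zpowers a).relIndex (Subgroup.closure {a, b}) = 2 := by
    rw [hsup, relIndex_sup_right_of_le_normalizer hnorm, relIndex_zpowers_eq_two hb hb2]
  have hle : Subgroup.zpowers a ≤ Subgroup.closure {a, b} := hsup ▸ le_sup_right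
  rw [← Subgroup.relIndex_bot_left, ← Subgroup.relIndex_mul_relIndex _ _ _ bot_le hle, hindex,
    Subgroup.relIndex_bot_left, Nat.card_zpowers, mul_comm]

theorem notMem_zpowers_of_not_commute {a b : G} (hab : ¬Commute a b) :
    b ∉ Subgroup.zpowers a := by
  intro hb
  obtain ⟨n, rfl⟩ := Subgroup.mem_zpowers_iff.1 hb
  exact hab ((Commute.refl a).zpow_right n)

end IndexTwo

section Semidihedral

variable {G : Type*} [Group G]

theorem card_closure_pair_of_semidihedral_relations {a b : G} {n : ℕ} (hn : 2 ≤ n)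
    (ha : orderOf a = 2 ^ (n + 1)) (hb : b ^ 2 = 1) (hab : a * b = b * a ^ (2 ^ n - 1)) :
    Nat.card (Subgroup.closure {a, b}) = 2 ^ (n + 2) := by
  have hpow : a ^ (2 ^ n - 1) ≠ a ^ 1 := by
    have h4 : 2 ^ 2 ≤ 2 ^ n := Nat.pow_le_pow_right two_pos hn
    refine pow_injOn_Iio_orderOf.ne ?_ ?_ ?_ <;> grind
  have hcomm : ¬Commute a b := fun h ↦
    hpow (by rw [pow_one]; exact mul_left_cancel (hab.symm.trans h))
  have hconj : b⁻¹ * a * b = a ^ (2 ^ n - 1) := by rw [mul_assoc, hab, inv_mul_cancel_left]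
  rw [card_closure_pair_eq_two_mul_orderOf (notMem_zpowers_of_not_commute hcomm)
    (hb ▸ Subgroup.one_mem _) (hconj ▸ Subgroup.npow_mem_zpowers a _), ha, ← pow_succ']

theorem mul_mul_eq_mul_mul_pow {x y : G} {n : ℕ} (hy : y ^ 2 = 1)
    (hxy : (x * y) ^ (n + 1) = x ^ 2) : x * y * y = y * (x * y) ^ n := by
  have hpow : (x * y) ^ n = (x * y)⁻¹ * x ^ 2 := by
    rw [← hxy, pow_succ', inv_mul_cancel_left]
  calc x * y * y = x := by rw [mul_assoc, ← sq, hy, mul_one]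
    _ = y * ((x * y)⁻¹ * x ^ 2) := by group
    _ = y * (x * y) ^ n := by rw [hpow]

theorem closure_mul_pair (x y : G) : Subgroup.closure {x * y, y} = Subgroup.closure {x, y} := by
  have left_mem (u v : G) : u ∈ Subgroup.closure {u, v} := Subgroup.subset_closure (by simp)
  have right_mem (u v : G) : v ∈ Subgroup.closure {u, v} := Subgroup.subset_closure (by simp)
  apply le_antisymm <;> rw [Subgroup.closure_le, Set.pair_subset_iff]
  · exact ⟨mul_mem (left_mem x y) (right_mem x y), right_mem x y⟩
  · exact ⟨(Subgroup.mul_mem_cancel_right _ (right_mem _ y)).1 (left_mem _ y), right_mem _ y⟩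

end Semidihedral

section Matrices

theorem inv_sqrt_two_mul_self : (Real.sqrt 2 : ℂ)⁻¹ * (Real.sqrt 2 : ℂ)⁻¹ = 2⁻¹ := by
  rw [← mul_inv, ← Complex.ofReal_mul, Real.mul_self_sqrt zero_le_two, Complex.ofReal_ofNat]

theorem jM_mul_self : jM * jM = -1 := by
  simp [jM, Matrix.one_fin_two]

theorem dM_mul_self : dM * dM = 1 := by
  rw [dM, smul_mul_smul_comm, inv_sqrt_two_mul_self, Matrix.one_fin_two]
  norm_num

theorem jM_mul_dM_sq : (jM * dM) ^ 2 = !![0, -1; 1, 0] := by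
  rw [sq, dM, mul_smul_comm, smul_mul_smul_comm, inv_sqrt_two_mul_self]
  norm_num [jM]

theorem jM_mul_dM_pow_four : (jM * dM) ^ 4 = -1 := by
  rw [show 4 = 2 * 2 from rfl, pow_mul, jM_mul_dM_sq, sq]
  simp [Matrix.one_fin_two]

/-- The generator `j` of `H`, that is, `jM` as an element of `GL(2, ℂ)`. -/
def jGL : GL (Fin 2) ℂ := ⟨jM, -jM, by simp [jM_mul_self], by simp [jM_mul_self]⟩

/-- The generator `d` of `H`, that is, `dM` as an element of `GL(2, ℂ)`. -/
def dGL : GL (Fin 2) ℂ := ⟨dM, dM, dM_mul_self, dM_mul_self⟩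

theorem H_eq_closure_pair : H = Subgroup.closure {jGL, dGL} :=
  congrArg Subgroup.closure <| Set.ext fun g ↦
    or_congr (Units.ext_iff (u := g) (v := jGL)).symm (Units.ext_iff (u := g) (v := dGL)).symm

theorem jGL_sq : jGL ^ 2 = -1 := Units.ext ((sq jM).trans jM_mul_self)

theorem dGL_sq : dGL ^ 2 = 1 := Units.ext ((sq dM).trans dM_mul_self)

theorem jGL_mul_dGL_pow_four : (jGL * dGL) ^ 4 = -1 := Units.ext jM_mul_dM_pow_four

theorem orderOf_jGL_mul_dGL : orderOf (jGL * dGL) = 8 := by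
  have : CharZero (Matrix (Fin 2) (Fin 2) ℂ) :=
    charZero_of_injective_algebraMap (algebraMap ℂ _).injective
  refine orderOf_eq_prime_pow (p := 2) (n := 2) ?_ ?_
  · exact jGL_mul_dGL_pow_four ▸ neg_units_ne_self 1
  · rw [pow_succ, pow_mul, show 2 ^ 2 = 4 from rfl, jGL_mul_dGL_pow_four, neg_one_sq]

end Matrices

theorem H_is_semidihedral_of_order_16 :
    Nat.card H = 16 ∧
    ∃ a b : GL (Fin 2) ℂ,
      (a : Matrix (Fin 2) (Fin 2) ℂ) = jM * dM ∧
      (b : Matrix (Fin 2) (Fin 2) ℂ) = dM ∧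
      Subgroup.closure {a, b} = H ∧
      a ^ 8 = 1 ∧ b ^ 2 = 1 ∧ a * b = b * a ^ 3 := by
  have hpow8 : (jGL * dGL) ^ 8 = 1 := orderOf_jGL_mul_dGL ▸ pow_orderOf_eq_one (jGL * dGL)
  have hrel : jGL * dGL * dGL = dGL * (jGL * dGL) ^ 3 :=
    mul_mul_eq_mul_mul_pow dGL_sq (jGL_mul_dGL_pow_four.trans jGL_sq.symm)
  have hgen : Subgroup.closure {jGL * dGL, dGL} = H :=
    (closure_mul_pair jGL dGL).trans H_eq_closure_pair.symm
  have hcard : Nat.card H = 16 :=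
    hgen ▸ card_closure_pair_of_semidihedral_relations le_rfl orderOf_jGL_mul_dGL dGL_sq hrel
  exact ⟨hcard, jGL * dGL, dGL, rfl, rfl, hgen, hpow8, dGL_sq, hrel⟩
end
end

section
/- The subgroup Q of G generated by {i, j} has order 8, is isomorphic to the quaternion group Q₈, is a normal subgroup of G, and the quotient group G/Q is isomorphic to the symmetric group on 3 letters. -/
open Matrix Complex
open scoped MatrixGroups

noncomputable section

def Q : Subgroup G :=
  Subgroup.closure {g : G |
    ((g : GL (Fin 2) ℂ) : Matrix (Fin 2) (Fin 2) ℂ) = iM ∨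
    ((g : GL (Fin 2) ℂ) : Matrix (Fin 2) (Fin 2) ℂ) = jM}

/-- The proposition that the quotient of `Γ` by the normal subgroup `K`
is isomorphic to `Δ` as a group. -/
def QuotIsoTo {Γ : Type} [Group Γ] (K : Subgroup Γ) (hK : K.Normal)
    (Δ : Type) [Group Δ] : Prop := by
  letI := hK
  exact Nonempty ((Γ ⧸ K) ≃* Δ)

/-!
The matrix `w` permutes the three cyclic subgroups `⟨i⟩`, `⟨j⟩`, `⟨k⟩` of `Q` cyclically under
conjugation, and `d` fixes `⟨i⟩` and swaps the other two; hence `Q` is normal. Since `i ∈ Q`, the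
quotient is generated by the classes of `w` and `d`, which satisfy the relations `w³ = d² = 1` and
`d w d⁻¹ = w⁻¹` of the dihedral group of order 6. In a dihedral or quaternion group, an element
inverting a generator `x` of the cyclic part cannot be a power of `x` unless `x² = 1`; so, to see
that the relations do not collapse, it suffices to know the orders of `i` in `Q` and of `w` in
`G ⧸ Q`, and the latter is 3 because 3 does not divide `|Q| = 8`.
-/

section Generation

variable {Γ : Type*} [Group Γ]

theorem conj_mem_of_semiconjBy {K : Subgroup Γ} {g a b : Γ} (h : SemiconjBy g a b) (hb : b ∈ K) :
    g * a * g⁻¹ ∈ K := by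
  rwa [mul_inv_eq_of_eq_mul h.eq]

theorem normal_closure_of_conj_mem {S T : Set Γ} [Finite (Subgroup.closure T)]
    (hS : Subgroup.closure S = ⊤)
    (hconj : ∀ g ∈ S, ∀ t ∈ T, g * t * g⁻¹ ∈ Subgroup.closure T) :
    (Subgroup.closure T).Normal := by
  rw [← Subgroup.normalizer_eq_top_iff, eq_top_iff, ← hS, Subgroup.closure_le]
  intro g hg
  have hmap : Subgroup.closure T ≤ (Subgroup.closure T).comap (MulAut.conj g).toMonoidHom :=
    (Subgroup.closure_le _).2 (hconj g hg)
  exact Subgroup.mem_normalizer_fintype fun _ ht => hmap ht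

theorem closure_image_mk'_eq_top_of_closure_insert {N : Subgroup Γ} [N.Normal] {g : Γ} {S : Set Γ}
    (hg : g ∈ N) (hS : Subgroup.closure (insert g S) = ⊤) :
    Subgroup.closure (QuotientGroup.mk' N '' S) = ⊤ := by
  have hg_one : QuotientGroup.mk' N g = 1 := (QuotientGroup.eq_one_iff g).2 hg
  rw [← Subgroup.closure_insert_one, ← hg_one, ← Set.image_insert_eq, ← MonoidHom.map_closure, hS,
    Subgroup.map_top_of_surjective _ (QuotientGroup.mk'_surjective N)]

end Generation

section InvertingPair

variable {H : Type*} [Group H] {x y : H} {n : ℕ}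

theorem notMem_zpowers_of_semiconjBy_inv (hx : x ^ 2 ≠ 1) (hyx : SemiconjBy y x x⁻¹) :
    y ∉ Subgroup.zpowers x := by
  rintro ⟨k, rfl⟩
  have hcomm : x ^ k * x = x * x ^ k := (Commute.zpow_self x k).eq
  have hinv : x⁻¹ = x := mul_right_cancel (hyx.eq.symm.trans hcomm)
  exact hx (by rw [sq, mul_eq_one_iff_eq_inv, hinv])

theorem mul_zpow_ne_one_of_semiconjBy_inv (hx : x ^ 2 ≠ 1) (hyx : SemiconjBy y x x⁻¹) (k : ℤ) :
    y * x ^ k ≠ 1 := fun h =>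
  notMem_zpowers_of_semiconjBy_inv hx hyx
    (eq_inv_of_mul_eq_one_left h ▸ inv_mem (Subgroup.zpow_mem_zpowers x k))

theorem zpow_mul_mul_zpow_of_semiconjBy_inv (hyx : SemiconjBy y x x⁻¹) (k l : ℤ) :
    x ^ k * (y * x ^ l) = y * x ^ (l - k) := by
  have hswap : y * x ^ (-k) = x ^ k * y := by simpa using (hyx.zpow_right (-k)).eq
  rw [← mul_assoc, ← hswap, mul_assoc, ← _root_.zpow_add, neg_add_eq_sub]

theorem mul_zpow_mul_mul_zpow_of_semiconjBy_inv (hyx : SemiconjBy y x x⁻¹) (k l : ℤ) :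
    y * x ^ k * (y * x ^ l) = y ^ 2 * x ^ (l - k) := by
  rw [mul_assoc, zpow_mul_mul_zpow_of_semiconjBy_inv hyx, ← mul_assoc, sq]

theorem zpow_cast_intCast_of_pow_eq_one (hx : x ^ n = 1) (k : ℤ) :
    x ^ ((k : ZMod n).cast : ℤ) = x ^ k := by
  rw [ZMod.coe_intCast, ← zpow_mod_orderOf, Int.emod_emod_of_dvd, zpow_mod_orderOf]
  exact_mod_cast orderOf_dvd_of_pow_eq_one hx

theorem zpow_cast_eq_one_iff (hx : orderOf x = n) (i : ZMod n) : x ^ (i.cast : ℤ) = 1 ↔ i = 0 := by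
  rw [← orderOf_dvd_iff_zpow_eq_one, hx, ← ZMod.intCast_zmod_eq_zero_iff_dvd,
    ZMod.intCast_zmod_cast]

/-- The homomorphism out of the dihedral group attached to a pair satisfying the relations
`xⁿ = y² = 1`, `y x y⁻¹ = x⁻¹`; it sends `r 1` to `x` and `sr 0` to `y`. The last relation is
encoded by `SemiconjBy`. -/
def dihedralLift (hx : x ^ n = 1) (hy : y ^ 2 = 1) (hyx : SemiconjBy y x x⁻¹) :
    DihedralGroup n →* H :=
  MonoidHom.mk'
    (fun
      | .r i => x ^ (i.cast : ℤ)
      | .sr i => y * x ^ (i.cast : ℤ)) <| by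
    have hcast := zpow_cast_intCast_of_pow_eq_one hx
    rintro (i | i) (j | j) <;>
      obtain ⟨k, rfl⟩ := ZMod.intCast_surjective i <;>
      obtain ⟨l, rfl⟩ := ZMod.intCast_surjective j
    · simp only [DihedralGroup.r_mul_r, ← Int.cast_add, hcast, _root_.zpow_add]
    · simp only [DihedralGroup.r_mul_sr, ← Int.cast_sub, hcast,
        zpow_mul_mul_zpow_of_semiconjBy_inv hyx]
    · simp only [DihedralGroup.sr_mul_r, ← Int.cast_add, hcast, _root_.zpow_add, mul_assoc]
    · simp only [DihedralGroup.sr_mul_sr, ← Int.cast_sub, hcast,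
        mul_zpow_mul_mul_zpow_of_semiconjBy_inv hyx, hy, one_mul]

/-- The homomorphism out of the generalised quaternion group attached to a pair satisfying the
relations `x²ⁿ = 1`, `y² = xⁿ`, `y x y⁻¹ = x⁻¹`; it sends `a 1` to `x` and `xa 0` to `y`. The last
relation is encoded by `SemiconjBy`. -/
def quaternionLift (hx : x ^ (2 * n) = 1) (hy : y ^ 2 = x ^ n) (hyx : SemiconjBy y x x⁻¹) :
    QuaternionGroup n →* H :=
  MonoidHom.mk'
    (fun
      | .a i => x ^ (i.cast : ℤ)
      | .xa i => y * x ^ (i.cast : ℤ)) <| by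
    have hcast := zpow_cast_intCast_of_pow_eq_one hx
    rintro (i | i) (j | j) <;>
      obtain ⟨k, rfl⟩ := ZMod.intCast_surjective i <;>
      obtain ⟨l, rfl⟩ := ZMod.intCast_surjective j
    · simp only [QuaternionGroup.a_mul_a, ← Int.cast_add, hcast, _root_.zpow_add]
    · simp only [QuaternionGroup.a_mul_xa, ← Int.cast_sub, hcast,
        zpow_mul_mul_zpow_of_semiconjBy_inv hyx]
    · simp only [QuaternionGroup.xa_mul_a, ← Int.cast_add, hcast, _root_.zpow_add, mul_assoc]
    · have hn : (n : ZMod (2 * n)) + l - k = ((n + (l - k) : ℤ) : ZMod (2 * n)) := by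
        push_cast
        ring
      simp only [QuaternionGroup.xa_mul_xa, hn, hcast,
        mul_zpow_mul_mul_zpow_of_semiconjBy_inv hyx, hy, _root_.zpow_add, _root_.zpow_natCast]

theorem dihedralLift_injective (hx : orderOf x = n) (hx2 : x ^ 2 ≠ 1) (hy : y ^ 2 = 1)
    (hyx : SemiconjBy y x x⁻¹) :
    Function.Injective (dihedralLift (orderOf_dvd_iff_pow_eq_one.1 hx.dvd) hy hyx) := by
  rw [injective_iff_map_eq_one]
  rintro (i | i) hi
  · exact congrArg DihedralGroup.r ((zpow_cast_eq_one_iff hx i).1 hi)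
  · exact absurd hi (mul_zpow_ne_one_of_semiconjBy_inv hx2 hyx _)

theorem quaternionLift_injective (hx : orderOf x = 2 * n) (hx2 : x ^ 2 ≠ 1) (hy : y ^ 2 = x ^ n)
    (hyx : SemiconjBy y x x⁻¹) :
    Function.Injective (quaternionLift (orderOf_dvd_iff_pow_eq_one.1 hx.dvd) hy hyx) := by
  rw [injective_iff_map_eq_one]
  rintro (i | i) hi
  · exact congrArg QuaternionGroup.a ((zpow_cast_eq_one_iff hx i).1 hi)
  · exact absurd hi (mul_zpow_ne_one_of_semiconjBy_inv hx2 hyx _)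

theorem range_dihedralLift (hx : x ^ n = 1) (hy : y ^ 2 = 1) (hyx : SemiconjBy y x x⁻¹) :
    (dihedralLift hx hy hyx).range = Subgroup.closure {x, y} := by
  have hx_mem : x ∈ Subgroup.closure {x, y} := Subgroup.subset_closure (.inl rfl)
  have hy_mem : y ∈ Subgroup.closure {x, y} := Subgroup.subset_closure (.inr rfl)
  apply le_antisymm
  · rintro _ ⟨i | i, rfl⟩
    · exact zpow_mem hx_mem _
    · exact mul_mem hy_mem (zpow_mem hx_mem _)
  · rw [Subgroup.closure_le]
    rintro _ (rfl | rfl)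
    · exact ⟨.r (1 : ℤ), (zpow_cast_intCast_of_pow_eq_one hx 1).trans (zpow_one _)⟩
    · exact ⟨.sr 0, by simp [dihedralLift]⟩

theorem range_quaternionLift (hx : x ^ (2 * n) = 1) (hy : y ^ 2 = x ^ n)
    (hyx : SemiconjBy y x x⁻¹) :
    (quaternionLift hx hy hyx).range = Subgroup.closure {x, y} := by
  have hx_mem : x ∈ Subgroup.closure {x, y} := Subgroup.subset_closure (.inl rfl)
  have hy_mem : y ∈ Subgroup.closure {x, y} := Subgroup.subset_closure (.inr rfl)
  apply le_antisymm
  · rintro _ ⟨i | i, rfl⟩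
    · exact zpow_mem hx_mem _
    · exact mul_mem hy_mem (zpow_mem hx_mem _)
  · rw [Subgroup.closure_le]
    rintro _ (rfl | rfl)
    · exact ⟨.a (1 : ℤ), (zpow_cast_intCast_of_pow_eq_one hx 1).trans (zpow_one _)⟩
    · exact ⟨.xa 0, by simp [quaternionLift]⟩

theorem nonempty_dihedralGroup_mulEquiv_of_closure_eq_top (hx : orderOf x = n) (hx2 : x ^ 2 ≠ 1)
    (hy : y ^ 2 = 1) (hyx : SemiconjBy y x x⁻¹) (htop : Subgroup.closure {x, y} = ⊤) :
    Nonempty (DihedralGroup n ≃* H) :=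
  ⟨MulEquiv.ofBijective _ ⟨dihedralLift_injective hx hx2 hy hyx,
    MonoidHom.range_eq_top.1 ((range_dihedralLift _ hy hyx).trans htop)⟩⟩

theorem nonempty_quaternionGroup_mulEquiv_closure (hx : orderOf x = 2 * n) (hx2 : x ^ 2 ≠ 1)
    (hy : y ^ 2 = x ^ n) (hyx : SemiconjBy y x x⁻¹) :
    Nonempty (QuaternionGroup n ≃* Subgroup.closure {x, y}) :=
  ⟨(MonoidHom.ofInjective (quaternionLift_injective hx hx2 hy hyx)).trans
    (MulEquiv.subgroupCongr (range_quaternionLift _ hy hyx))⟩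

end InvertingPair

theorem nonempty_dihedralGroup_three_mulEquiv_perm :
    Nonempty (DihedralGroup 3 ≃* Equiv.Perm (Fin 3)) := by
  have hcycle : (finRotate 3).IsCycle := isCycle_finRotate
  refine nonempty_dihedralGroup_mulEquiv_of_closure_eq_top (x := finRotate 3)
    (y := Equiv.swap 0 1) ?_ (by decide) (by decide)
    (by rw [SemiconjBy]; decide) ?_
  · rw [hcycle.orderOf, support_finRotate, Finset.card_univ, Fintype.card_fin]
  · exact Equiv.Perm.closure_prime_cycle_swap (by decide) hcycle support_finRotate
      ⟨0, 1, by decide, rfl⟩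

theorem iM_sq : iM ^ 2 = -1 := by
  simp [iM, sq, Matrix.one_fin_two]

theorem jM_sq : jM ^ 2 = -1 := by
  simp [jM, sq, Matrix.one_fin_two]

theorem iM_mul_jM_mul_iM : iM * (jM * iM) = jM := by
  simp [iM, jM]

theorem matrix_fin_two_inj {R : Type*} {a b c d a' b' c' d' : R} :
    !![a, b; c, d] = !![a', b'; c', d'] ↔ (a = a' ∧ b = b') ∧ c = c' ∧ d = d' := by
  simp [Matrix.vecCons_inj]

theorem wM_eq : wM = !![(-1 + I) / 2, (1 + I) / 2; (-1 + I) / 2, (-1 - I) / 2] := by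
  simp [wM, div_eq_inv_mul]

theorem wM_mul_iM : wM * iM = iM * jM * wM := by
  simp only [wM_eq, iM, jM, Matrix.mul_fin_two, matrix_fin_two_inj]
  grind [Complex.I_mul_I]

theorem wM_mul_jM : wM * jM = iM * wM := by
  simp only [wM_eq, iM, jM, Matrix.mul_fin_two, matrix_fin_two_inj]
  grind [Complex.I_mul_I]

theorem inv_sqrt_two_sq : ((Real.sqrt 2 : ℂ)⁻¹) ^ 2 = 1 / 2 := by
  rw [inv_pow, ← Complex.ofReal_pow, Real.sq_sqrt zero_le_two, Complex.ofReal_ofNat, one_div]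

theorem dM_sq : dM ^ 2 = 1 := by
  rw [dM, smul_pow, inv_sqrt_two_sq, Matrix.one_fin_two]
  norm_num [sq]

theorem iM_mul_dM_mul_iM : iM * (dM * iM) = dM := by
  simp [iM, dM]

theorem dM_mul_jM : dM * jM = jM * iM * dM := by
  simp [iM, jM, dM, mul_comm]

theorem wM_mul_dM_mul_wM : wM * (dM * wM) = dM := by
  simp only [wM_eq, dM, Matrix.smul_mul, Matrix.mul_smul, Matrix.mul_fin_two]
  congr 1
  rw [matrix_fin_two_inj]
  grind [Complex.I_mul_I]

theorem iM_pow_four : iM ^ 4 = 1 := by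
  rw [show 4 = 2 * 2 from rfl, pow_mul, iM_sq, neg_one_sq]

theorem jM_pow_four : jM ^ 4 = 1 := by
  rw [show 4 = 2 * 2 from rfl, pow_mul, jM_sq, neg_one_sq]

theorem wM_pow_three : wM ^ 3 = 1 := by
  simp only [pow_succ, pow_zero, one_mul, wM_eq, Matrix.one_fin_two, Matrix.mul_fin_two,
    matrix_fin_two_inj]
  grind [Complex.I_mul_I]

theorem iM_sq_ne_one : iM ^ 2 ≠ 1 := fun h => by
  have hentry : (-1 : ℂ) = 1 := by simpa using congrFun₂ (iM_sq.symm.trans h) 0 0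
  norm_num at hentry

theorem wM_ne_one : wM ≠ 1 := fun h => by
  simpa [wM] using congrArg Complex.re (congrFun₂ h 0 1)

/-- The matrix `i` as an element of `G`. -/
def iG : G :=
  ⟨.ofPowEqOne iM 4 iM_pow_four four_ne_zero, Subgroup.subset_closure (.inl rfl)⟩

/-- The matrix `w` as an element of `G`. -/
def wG : G :=
  ⟨.ofPowEqOne wM 3 wM_pow_three three_ne_zero, Subgroup.subset_closure (.inr (.inl rfl))⟩

/-- The matrix `d` as an element of `G`. -/
def dG : G :=
  ⟨.ofPowEqOne dM 2 dM_sq two_ne_zero, Subgroup.subset_closure (.inr (.inr rfl))⟩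

/-- The matrix `j` as an element of `G`; it is not one of the generators of `G`, but equals
`w⁻¹ i w`. -/
def jG : G :=
  ⟨.ofPowEqOne jM 4 jM_pow_four four_ne_zero, by
    have hconj : Units.ofPowEqOne jM 4 jM_pow_four four_ne_zero =
        ((wG⁻¹ * (iG * wG) : G) : GL (Fin 2) ℂ) :=
      eq_inv_mul_of_mul_eq (Units.ext wM_mul_jM)
    exact hconj ▸ SetLike.coe_mem _⟩

theorem coe_matrix_injective :
    Function.Injective fun g : G => ((g : GL (Fin 2) ℂ) : Matrix (Fin 2) (Fin 2) ℂ) :=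
  Units.val_injective.comp Subtype.val_injective

theorem closure_iG_wG_dG : Subgroup.closure {iG, wG, dG} = ⊤ := by
  refine (congrArg Subgroup.closure (Set.ext fun g => ?_)).trans
    Subgroup.closure_closure_coe_preimage
  simp only [Set.mem_insert_iff, Set.mem_singleton_iff, ← coe_matrix_injective.eq_iff]
  rfl

theorem Q_eq_closure : Q = Subgroup.closure {iG, jG} := by
  refine congrArg Subgroup.closure (Set.ext fun g => ?_)
  simp only [Set.mem_insert_iff, Set.mem_singleton_iff, ← coe_matrix_injective.eq_iff]
  rfl

theorem iG_mem_Q : iG ∈ Q := Subgroup.subset_closure (.inl rfl)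

theorem jG_mem_Q : jG ∈ Q := Subgroup.subset_closure (.inr rfl)

theorem iG_sq_ne_one : iG ^ 2 ≠ 1 := coe_matrix_injective.ne_iff.1 iM_sq_ne_one

theorem orderOf_iG : orderOf iG = 4 :=
  orderOf_eq_prime_pow (p := 2) (n := 1) iG_sq_ne_one (coe_matrix_injective iM_pow_four)

theorem wG_pow_three : wG ^ 3 = 1 := coe_matrix_injective wM_pow_three

theorem orderOf_wG : orderOf wG = 3 :=
  orderOf_eq_prime wG_pow_three (coe_matrix_injective.ne_iff.1 wM_ne_one)

theorem semiconjBy_jG_iG : SemiconjBy jG iG iG⁻¹ :=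
  eq_inv_mul_of_mul_eq (coe_matrix_injective iM_mul_jM_mul_iM)

theorem semiconjBy_dG_iG : SemiconjBy dG iG iG⁻¹ :=
  eq_inv_mul_of_mul_eq (coe_matrix_injective iM_mul_dM_mul_iM)

theorem semiconjBy_dG_wG : SemiconjBy dG wG wG⁻¹ :=
  eq_inv_mul_of_mul_eq (coe_matrix_injective wM_mul_dM_mul_wM)

theorem semiconjBy_wG_iG : SemiconjBy wG iG (iG * jG) := coe_matrix_injective wM_mul_iM

theorem semiconjBy_wG_jG : SemiconjBy wG jG iG := coe_matrix_injective wM_mul_jM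

theorem semiconjBy_dG_jG : SemiconjBy dG jG (jG * iG) := coe_matrix_injective dM_mul_jM

theorem nonempty_quaternionGroup_mulEquiv_Q : Nonempty (QuaternionGroup 2 ≃* Q) := by
  rw [Q_eq_closure]
  exact nonempty_quaternionGroup_mulEquiv_closure orderOf_iG iG_sq_ne_one
    (coe_matrix_injective (jM_sq.trans iM_sq.symm)) semiconjBy_jG_iG

theorem card_Q : Nat.card Q = 8 := by
  obtain ⟨e⟩ := nonempty_quaternionGroup_mulEquiv_Q
  rw [← Nat.card_congr e.toEquiv, Nat.card_eq_fintype_card, QuaternionGroup.card]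

instance Q_normal : Q.Normal := by
  have hfinite : Finite Q := Nat.finite_of_card_ne_zero (card_Q ▸ by decide)
  rw [Q_eq_closure] at hfinite ⊢
  refine normal_closure_of_conj_mem closure_iG_wG_dG ?_
  rw [← Q_eq_closure]
  rintro _ (rfl | rfl | rfl) _ (rfl | rfl)
  · exact mul_mem (mul_mem iG_mem_Q iG_mem_Q) (inv_mem iG_mem_Q)
  · exact mul_mem (mul_mem iG_mem_Q jG_mem_Q) (inv_mem iG_mem_Q)
  · exact conj_mem_of_semiconjBy semiconjBy_wG_iG (mul_mem iG_mem_Q jG_mem_Q)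
  · exact conj_mem_of_semiconjBy semiconjBy_wG_jG iG_mem_Q
  · exact conj_mem_of_semiconjBy semiconjBy_dG_iG (inv_mem iG_mem_Q)
  · exact conj_mem_of_semiconjBy semiconjBy_dG_jG (mul_mem jG_mem_Q iG_mem_Q)

theorem wG_notMem_Q : wG ∉ Q := fun h => by
  have hdvd := Q.orderOf_dvd_natCard h
  rw [orderOf_wG, card_Q] at hdvd
  exact absurd hdvd (by decide)

theorem orderOf_mk_wG : orderOf (QuotientGroup.mk' Q wG) = 3 :=
  orderOf_eq_prime (by rw [← map_pow, wG_pow_three, map_one])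
    (mt (QuotientGroup.eq_one_iff wG).1 wG_notMem_Q)

theorem nonempty_dihedralGroup_three_mulEquiv_quotient_Q :
    Nonempty (DihedralGroup 3 ≃* G ⧸ Q) := by
  have hgen := closure_image_mk'_eq_top_of_closure_insert iG_mem_Q closure_iG_wG_dG
  rw [Set.image_pair] at hgen
  refine nonempty_dihedralGroup_mulEquiv_of_closure_eq_top orderOf_mk_wG ?_ ?_ ?_ hgen
  · exact pow_ne_one_of_lt_orderOf two_ne_zero (orderOf_mk_wG ▸ by decide)
  · rw [← map_pow, show dG ^ 2 = 1 from coe_matrix_injective dM_sq, map_one]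
  · simpa only [map_inv] using semiconjBy_dG_wG.map (QuotientGroup.mk' Q)

theorem quaternion_normal_subgroup :
    Nat.card Q = 8 ∧
    Nonempty (Q ≃* QuaternionGroup 2) ∧
    ∃ hQ : Q.Normal, QuotIsoTo Q hQ (Equiv.Perm (Fin 3)) := by
  obtain ⟨quaternionIso⟩ := nonempty_quaternionGroup_mulEquiv_Q
  obtain ⟨quotientIso⟩ := nonempty_dihedralGroup_three_mulEquiv_quotient_Q
  obtain ⟨permIso⟩ := nonempty_dihedralGroup_three_mulEquiv_perm
  exact ⟨card_Q, ⟨quaternionIso.symm⟩, Q_normal, ⟨quotientIso.symm.trans permIso⟩⟩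
end
end
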